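/- arXiv:2510.21669 — 5 statements merged into one kernel-verified Lean document; each statement's English description precedes it below -/
import Mathlib

section
/- Exact evaluation of the Laplace-type integral (core computation of Proposition 1): Let M > 0, ξ ≥ 0, γ > 0 and c ∈ (0,1), and set u_± = √M (√(1±c) − γ√ξ). Then (1/(2c)) ∫_{1−c}^{1+c} exp( −M( x + ξ − 2γ√(ξ x) ) ) dx = ( e^{M ξ (γ² − 1)} / (c M) ) · [ (1/2)( e^{−u_−²} − e^{−u_+²} ) + (γ/2) √(π ξ M) ( erf(u_+) − erf(u_−) ) ], where erf(t) = (2/√π) ∫₀^t e^{−s²} ds. -/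
open Real

/-- The Gauss error function `erf(t) = (2/√π) ∫₀ᵗ e^{−s²} ds`. -/
noncomputable def erf (t : ℝ) : ℝ :=
  (2 / Real.sqrt Real.pi) * ∫ s in (0 : ℝ)..t, Real.exp (-(s ^ 2))

/-! The substitution `x = y²` turns the integrand into `2y exp (-M (y² + ξ - 2γ√ξ y))`. Completing
the square makes this a Gaussian centred at `γ√ξ` times `2y`; after `u = √M (y - γ√ξ)` the factor
`2y` splits into a multiple of `2u`, which integrates to an exponential, and a constant, which
integrates to `erf`. -/

theorem integral_exp_neg_sq (a b : ℝ) :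
    ∫ s in a..b, exp (-(s ^ 2)) = √π / 2 * (erf b - erf a) := by
  have hint (t : ℝ) : IntervalIntegrable (fun s ↦ exp (-(s ^ 2))) MeasureTheory.volume 0 t :=
    Continuous.intervalIntegrable (by fun_prop) 0 t
  rw [← intervalIntegral.integral_interval_sub_left (hint b) (hint a), erf, erf]
  field

theorem integral_two_mul_mul_exp_neg_sq (a b : ℝ) :
    ∫ u in a..b, 2 * u * exp (-(u ^ 2)) = exp (-(a ^ 2)) - exp (-(b ^ 2)) := by
  have hderiv (u : ℝ) :
      HasDerivAt (fun u ↦ -exp (-(u ^ 2))) (2 * u * exp (-(u ^ 2))) u :=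
    (hasDerivAt_pow 2 u).fun_neg.exp.fun_neg.congr_deriv (by ring)
  rw [intervalIntegral.integral_eq_sub_of_hasDerivAt (fun u _ ↦ hderiv u)
    (Continuous.intervalIntegrable (by fun_prop) a b)]
  ring

theorem integral_two_mul_mul_exp_neg_sq_mul_sub {s : ℝ} (hs : s ≠ 0) (m a b : ℝ) :
    ∫ y in a..b, 2 * y * exp (-(s * (y - m)) ^ 2) =
      (exp (-(s * (a - m)) ^ 2) - exp (-(s * (b - m)) ^ 2) +
        m * s * √π * (erf (s * (b - m)) - erf (s * (a - m)))) / s ^ 2 := by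
  calc ∫ y in a..b, 2 * y * exp (-(s * (y - m)) ^ 2)
    _ = ∫ y in a..b, (2 * (s * y - s * m) * exp (-((s * y - s * m) ^ 2)) +
          2 * m * s * exp (-((s * y - s * m) ^ 2))) / s := by
        congr! 2 with y
        rw [mul_sub]
        field
    _ = s⁻¹ * ∫ u in (s * a - s * m)..(s * b - s * m),
          (2 * u * exp (-(u ^ 2)) + 2 * m * s * exp (-(u ^ 2))) / s :=
        intervalIntegral.integral_comp_mul_sub
          (fun u ↦ (2 * u * exp (-(u ^ 2)) + 2 * m * s * exp (-(u ^ 2))) / s) hs (s * m)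
    _ = _ := by
        rw [intervalIntegral.integral_div, intervalIntegral.integral_add
            (Continuous.intervalIntegrable (by fun_prop) _ _)
            (Continuous.intervalIntegrable (by fun_prop) _ _),
          intervalIntegral.integral_const_mul, integral_two_mul_mul_exp_neg_sq,
          integral_exp_neg_sq, ← mul_sub, ← mul_sub]
        field

theorem integral_eq_integral_two_mul_smul_comp_sq {E : Type*} [NormedAddCommGroup E]
    [NormedSpace ℝ E] (f : ℝ → E) {a b : ℝ} (ha : 0 ≤ a) (hb : 0 ≤ b) :
    ∫ x in a..b, f x = ∫ y in √a..√b, (2 * y) • f (y ^ 2) := by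
  have hderiv (y : ℝ) : HasDerivAt (fun y ↦ y ^ 2) (2 * y) y :=
    (hasDerivAt_pow 2 y).congr_deriv (by ring)
  have hnonneg : ∀ y ∈ Set.Ioo (min √a √b) (max √a √b), 0 ≤ 2 * y := fun y hy ↦
    mul_nonneg zero_le_two ((le_min (sqrt_nonneg a) (sqrt_nonneg b)).trans hy.1.le)
  have hsubst := intervalIntegral.integral_deriv_smul_comp_of_deriv_nonneg (g := f)
    (continuous_pow 2).continuousOn (fun y _ ↦ hderiv y) hnonneg
  rw [sq_sqrt ha, sq_sqrt hb] at hsubst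
  exact hsubst.symm

theorem exp_neg_mul_add_sub_eq_mul_exp_neg_sq {M ξ y : ℝ} (hM : 0 ≤ M) (hξ : 0 ≤ ξ) (hy : 0 ≤ y)
    (γ : ℝ) :
    exp (-(M * (y ^ 2 + ξ - 2 * γ * √(ξ * y ^ 2)))) =
      exp (M * ξ * (γ ^ 2 - 1)) * exp (-(√M * (y - γ * √ξ)) ^ 2) := by
  rw [← exp_add, sqrt_mul hξ, sqrt_sq hy, mul_pow, sq_sqrt hM]
  congr 1
  linear_combination M * γ ^ 2 * sq_sqrt hξ

theorem laplace_integral_eval_general {M ξ a b : ℝ} (hM : 0 < M) (hξ : 0 ≤ ξ) (ha : 0 ≤ a)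
    (hb : 0 ≤ b) (γ : ℝ) :
    ∫ x in a..b, exp (-(M * (x + ξ - 2 * γ * √(ξ * x)))) =
      exp (M * ξ * (γ ^ 2 - 1)) / M *
        (exp (-(√M * (√a - γ * √ξ)) ^ 2) - exp (-(√M * (√b - γ * √ξ)) ^ 2) +
          γ * √(π * ξ * M) * (erf (√M * (√b - γ * √ξ)) - erf (√M * (√a - γ * √ξ)))) := by
  have complete_square : ∀ y ∈ Set.uIcc √a √b,
      (2 * y) • exp (-(M * (y ^ 2 + ξ - 2 * γ * √(ξ * y ^ 2)))) =
        exp (M * ξ * (γ ^ 2 - 1)) * (2 * y * exp (-(√M * (y - γ * √ξ)) ^ 2)) := by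
    intro y hy
    have hy0 : 0 ≤ y := (le_min (sqrt_nonneg a) (sqrt_nonneg b)).trans hy.1
    rw [exp_neg_mul_add_sub_eq_mul_exp_neg_sq hM.le hξ hy0, smul_eq_mul]
    ring
  rw [integral_eq_integral_two_mul_smul_comp_sq _ ha hb,
    intervalIntegral.integral_congr complete_square, intervalIntegral.integral_const_mul,
    integral_two_mul_mul_exp_neg_sq_mul_sub (sqrt_ne_zero'.mpr hM), sq_sqrt hM.le,
    sqrt_mul (by positivity), sqrt_mul pi_nonneg]
  ring

/-- Exact evaluation of the Laplace-type integral (core computation of Proposition 1):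
for `M > 0`, `ξ ≥ 0`, `γ > 0` and `c ∈ (0,1)`, with `u_± = √M(√(1±c) − γ√ξ)`,
`(1/(2c)) ∫_{1−c}^{1+c} e^{−M(x+ξ−2γ√(ξx))} dx
  = (e^{Mξ(γ²−1)}/(cM)) ((1/2)(e^{−u_−²} − e^{−u_+²}) + (γ/2)√(πξM)(erf u_+ − erf u_−))`. -/
theorem laplace_integral_eval (M ξ γ c : ℝ) (hM : 0 < M) (hξ : 0 ≤ ξ) (hγ : 0 < γ)
    (hc : c ∈ Set.Ioo (0 : ℝ) 1) :
    (1 / (2 * c)) * (∫ x in (1 - c)..(1 + c), Real.exp (-(M * (x + ξ - 2 * γ * Real.sqrt (ξ * x)))))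
      = (Real.exp (M * ξ * (γ ^ 2 - 1)) / (c * M)) *
          ((1 / 2) * (Real.exp (-(Real.sqrt M * (Real.sqrt (1 - c) - γ * Real.sqrt ξ)) ^ 2)
              - Real.exp (-(Real.sqrt M * (Real.sqrt (1 + c) - γ * Real.sqrt ξ)) ^ 2))
            + (γ / 2) * Real.sqrt (Real.pi * ξ * M) *
              (erf (Real.sqrt M * (Real.sqrt (1 + c) - γ * Real.sqrt ξ))
                - erf (Real.sqrt M * (Real.sqrt (1 - c) - γ * Real.sqrt ξ)))) := by
  rw [laplace_integral_eval_general hM hξ (by linarith [hc.2]) (by linarith [hc.1])]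
  ring
end

section
/- Asymptotics of the integral when ξ = 1 (appendix discussion of Example 1): Fix c ∈ (0,1) and let γ_c = (1/(3c))((1+c)^{3/2} − (1−c)^{3/2}) ∈ (0,1). Define J(M) = (1/(2c)) ∫_{1−c}^{1+c} exp( −M( x + 1 − 2γ_c √x ) ) dx for M > 0. Then lim_{M→∞} J(M) · (c/γ_c) · √(M/π) · e^{M(1−γ_c²)} = 1; equivalently, J(M) = (1+o(1)) (γ_c/c) √(π/M) e^{−M(1−γ_c²)} as M → ∞. -/
open Real Filter

/-- `γ_c = (1/(3c))((1+c)^{3/2} − (1−c)^{3/2})`, the mean of `√Y` for `Y ~ Uni(1−c,1+c)`. -/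
noncomputable def gammaC (c : ℝ) : ℝ :=
  (1 / (3 * c)) * ((1 + c) ^ ((3 : ℝ) / 2) - (1 - c) ^ ((3 : ℝ) / 2))

/-- The Laplace-type integral `J(M) = (1/(2c)) ∫_{1−c}^{1+c} e^{−M(x+1−2γ_c√x)} dx`. -/
noncomputable def Jint (c M : ℝ) : ℝ :=
  (1 / (2 * c)) * ∫ x in (1 - c)..(1 + c), Real.exp (-(M * (x + 1 - 2 * gammaC c * Real.sqrt x)))

/-!
Completing the square, `x + 1 - 2 γ √x = (1 - γ²) + (√x - γ)²`, so after factoring out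
`exp (-M (1 - γ²))` and substituting `u = √x` what remains is the integral of `2 u` against
`exp (-M (u - γ)²)`. Times `√(M / π)`, this Gaussian is an approximate identity at `γ`, so the limit
is `2 γ` as soon as `γ` is interior. The mean value theorem for `x ^ (3 / 2)` gives `γ_c = √x₀` with
`x₀` strictly between `1 - c` and `1 + c`.
-/

open MeasureTheory Set Topology Bornology

section GaussianPeak

variable {E : Type*} [NormedAddCommGroup E] [NormedSpace ℝ E] [CompleteSpace E]
  {f : ℝ → E} {a b x₀ : ℝ}

theorem tendsto_integral_gaussian_peak_smul (hf : Integrable f) (hfx₀ : ContinuousAt f x₀) :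
    Tendsto (fun M : ℝ => ∫ x, (√(M / π) * exp (-(M * (x - x₀) ^ 2))) • f x)
      atTop (𝓝 (f x₀)) := by
  have integral_eq_one : ∫ t : ℝ, (√π)⁻¹ * exp (-t ^ 2) = 1 := by
    have gaussian : ∫ t : ℝ, exp (-t ^ 2) = √π := by simpa using integral_gaussian 1
    rw [integral_const_mul, gaussian, inv_mul_cancel₀ (by positivity)]
  have decay : Tendsto (fun t : ℝ => ‖t‖ ^ Module.finrank ℝ ℝ * ((√π)⁻¹ * exp (-t ^ 2)))
      (cobounded ℝ) (𝓝 0) := by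
    simpa [Metric.cobounded_eq_cocompact, mul_left_comm] using
      (tendsto_rpow_abs_mul_exp_neg_mul_sq_cocompact one_pos 1).const_mul (√π)⁻¹
  have peak := (tendsto_integral_comp_smul_smul_of_integrable' (fun t => by positivity)
    integral_eq_one decay hf hfx₀).comp tendsto_sqrt_atTop
  refine peak.congr' ?_
  filter_upwards [eventually_ge_atTop 0] with M hM
  refine integral_congr_ae (.of_forall fun x => ?_)
  have exponent : (√M * (x₀ - x)) ^ 2 = M * (x - x₀) ^ 2 := by
    rw [mul_pow, sq_sqrt hM, sub_sq_comm]
  have prefactor : √(M / π) = √M * (√π)⁻¹ := by rw [sqrt_div hM, div_eq_mul_inv]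
  simp only [Module.finrank_self, pow_one, smul_eq_mul, exponent, prefactor, mul_assoc]

theorem tendsto_intervalIntegral_gaussian_peak_smul (hf : IntervalIntegrable f volume a b)
    (hx₀ : x₀ ∈ Ioo a b) (hfx₀ : ContinuousAt f x₀) :
    Tendsto (fun M : ℝ => ∫ x in a..b, (√(M / π) * exp (-(M * (x - x₀) ^ 2))) • f x)
      atTop (𝓝 (f x₀)) := by
  have hab : a ≤ b := (hx₀.1.trans hx₀.2).le
  have indicator_eq : (Ioc a b).indicator f =ᶠ[𝓝 x₀] f :=
    eqOn_indicator.eventuallyEq_of_mem (Ioc_mem_nhds hx₀.1 hx₀.2)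
  have peak := tendsto_integral_gaussian_peak_smul
    ((integrable_indicator_iff measurableSet_Ioc).2 hf.1) (hfx₀.congr indicator_eq.symm)
  rw [indicator_eq.eq_of_nhds] at peak
  refine peak.congr fun M => ?_
  rw [intervalIntegral.integral_of_le hab, ← integral_indicator measurableSet_Ioc]
  simp only [indicator_smul]

end GaussianPeak

section Sqrt

variable {a b : ℝ}

theorem integral_comp_sqrt {E : Type*} [NormedAddCommGroup E] [NormedSpace ℝ E]
    (ha : 0 ≤ a) (hb : 0 ≤ b) (f : ℝ → E) :
    ∫ x in a..b, f √x = ∫ u in √a..√b, (2 * u) • f u := by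
  have nonneg_of_le {u : ℝ} (hu : min √a √b ≤ u) : 0 ≤ u :=
    (le_min (sqrt_nonneg a) (sqrt_nonneg b)).trans hu
  have change := intervalIntegral.integral_deriv_smul_comp_of_deriv_nonneg
    (a := √a) (b := √b) (f := fun u => u ^ 2) (f' := fun u => 2 * u) (g := fun x => f √x)
    (by fun_prop) (fun u _ => by simpa using hasDerivAt_pow 2 u)
    (fun u hu => mul_nonneg zero_le_two (nonneg_of_le hu.1.le))
  rw [sq_sqrt ha, sq_sqrt hb] at change
  rw [← change]
  refine intervalIntegral.integral_congr fun u hu => ?_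
  simp only [Function.comp_apply, sqrt_sq (nonneg_of_le hu.1)]

theorem tendsto_integral_exp_neg_mul_sqrt_sub_sqrt_sq {x₀ : ℝ} (ha : 0 ≤ a)
    (hx₀ : x₀ ∈ Ioo a b) :
    Tendsto (fun M : ℝ => √(M / π) * ∫ x in a..b, exp (-(M * (√x - √x₀) ^ 2)))
      atTop (𝓝 (2 * √x₀)) := by
  have hx₀_nonneg : 0 ≤ x₀ := ha.trans hx₀.1.le
  have peak := tendsto_intervalIntegral_gaussian_peak_smul (f := fun u => 2 * u)
    (Continuous.intervalIntegrable (by fun_prop) √a √b)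
    ⟨sqrt_lt_sqrt ha hx₀.1, sqrt_lt_sqrt hx₀_nonneg hx₀.2⟩ (by fun_prop)
  refine peak.congr fun M => ?_
  rw [integral_comp_sqrt ha (hx₀_nonneg.trans hx₀.2.le) fun u => exp (-(M * (u - √x₀) ^ 2)),
    ← intervalIntegral.integral_const_mul]
  simp only [smul_eq_mul, mul_assoc, mul_comm]

theorem integral_exp_neg_mul_add_one_sub_two_mul_sqrt (ha : 0 ≤ a) (hb : 0 ≤ b) (M g : ℝ) :
    ∫ x in a..b, exp (-(M * (x + 1 - 2 * g * √x))) =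
      exp (-(M * (1 - g ^ 2))) * ∫ x in a..b, exp (-(M * (√x - g) ^ 2)) := by
  rw [← intervalIntegral.integral_const_mul]
  refine intervalIntegral.integral_congr fun x hx => ?_
  have hx_nonneg : 0 ≤ x := (le_min ha hb).trans hx.1
  have complete_square : x + 1 - 2 * g * √x = (1 - g ^ 2) + (√x - g) ^ 2 := by
    linear_combination -sq_sqrt hx_nonneg
  simp only [complete_square, mul_add, neg_add, exp_add]

end Sqrt

theorem exists_gammaC_eq_sqrt {c : ℝ} (hc : 0 < c) :
    ∃ x ∈ Ioo (1 - c) (1 + c), gammaC c = √x := by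
  obtain ⟨x, hx, slope_eq⟩ := exists_hasDerivAt_eq_slope (fun x : ℝ => x ^ (3 / 2 : ℝ))
    (fun x => 3 / 2 * √x) (a := 1 - c) (b := 1 + c) (by linarith)
    (continuous_rpow_const (by norm_num)).continuousOn
    fun x _ => by
      -- For `x < 0` the junk values `x ^ (3 / 2)`, `x ^ (1 / 2)` and `√x` are all `0`.
      have deriv_rpow := hasDerivAt_rpow_const (x := x) (p := 3 / 2) (.inr (by norm_num))
      rwa [show (3 / 2 - 1 : ℝ) = 1 / 2 by norm_num, ← sqrt_eq_rpow] at deriv_rpow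
  refine ⟨x, hx, ?_⟩
  rw [add_sub_sub_cancel, eq_div_iff (by positivity)] at slope_eq
  rw [gammaC, ← slope_eq]
  field_simp
  ring

/-- Asymptotics of the integral when `ξ = 1`: for fixed `c ∈ (0,1)`,
`J(M) = (1+o(1)) (γ_c/c) √(π/M) e^{−M(1−γ_c²)}` as `M → ∞`, i.e.
`J(M)·(c/γ_c)·√(M/π)·e^{M(1−γ_c²)} → 1`. -/
theorem laplace_integral_asymptotics (c : ℝ) (hc : c ∈ Set.Ioo (0 : ℝ) 1) :
    Tendsto (fun M : ℝ =>
        Jint c M * (c / gammaC c) * Real.sqrt (M / Real.pi) * Real.exp (M * (1 - gammaC c ^ 2)))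
      atTop (nhds 1) := by
  obtain ⟨x₀, hx₀, gamma_eq⟩ := exists_gammaC_eq_sqrt hc.1
  have lower_pos : 0 < 1 - c := sub_pos.2 hc.2
  have upper_pos : 0 < 1 + c := by linarith [hc.1]
  have gamma_pos : 0 < gammaC c := gamma_eq ▸ sqrt_pos.2 (lower_pos.trans hx₀.1)
  have limit := (tendsto_integral_exp_neg_mul_sqrt_sub_sqrt_sq lower_pos.le hx₀).const_mul
    (2 * √x₀)⁻¹
  rw [← gamma_eq, inv_mul_cancel₀ (by positivity)] at limit
  refine limit.congr fun M => ?_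
  rw [Jint, integral_exp_neg_mul_add_one_sub_two_mul_sqrt lower_pos.le upper_pos.le, exp_neg]
  have hc_ne : c ≠ 0 := hc.1.ne'
  field_simp
end

section
/- Uniqueness of the optimal label permutation (Lemma A.1 / Lemma C.5 of prior work): Let k, n ≥ 1, let z₁, z₂ ∈ [k]^n, and suppose there exists a permutation τ* of [k] such that Ham(z₁, τ*∘z₂) < (1/2) min_{a∈[k]} |Γ_a(z₁)|, where Γ_a(z₁) = { i ∈ [n] : (z₁)_i = a } and Ham denotes the Hamming distance. Then τ* is the unique minimizer over permutations τ of [k] of the map τ ↦ Ham(z₁, τ∘z₂). -/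
open Finset

/-- Hamming distance between two labelings of `[n]` by `[k]`. -/
def hamDist (n k : ℕ) (z w : Fin n → Fin k) : ℕ :=
  (Finset.univ.filter fun i => z i ≠ w i).card

theorem hamDist_eq_hammingDist {n k : ℕ} (z w : Fin n → Fin k) :
    hamDist n k z w = hammingDist z w :=
  rfl

section

variable {ι α β : Type*} [Fintype ι] [DecidableEq α] {σ τ : β → α}

theorem card_fiber_le_hammingDist_comp_add_hammingDist_comp (hσ : σ.Injective)
    (z₁ : ι → α) (z₂ : ι → β) {b : β} (hb : σ b ≠ τ b) :
    #{i | z₁ i = σ b} ≤ hammingDist z₁ (σ ∘ z₂) + hammingDist z₁ (τ ∘ z₂) := by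
  classical
  have mismatch (i : ι) (hi : z₁ i = σ b) : z₁ i ≠ σ (z₂ i) ∨ z₁ i ≠ τ (z₂ i) := by
    by_contra! ⟨hσi, hτi⟩
    have hz₂ : z₂ i = b := hσ (hσi.symm.trans hi)
    exact hb (by rw [← hi, hτi, hz₂])
  calc #{i | z₁ i = σ b}
      ≤ #{i | z₁ i ≠ σ (z₂ i) ∨ z₁ i ≠ τ (z₂ i)} :=
        card_le_card (monotone_filter_right _ fun i _ => mismatch i)
    _ ≤ hammingDist z₁ (σ ∘ z₂) + hammingDist z₁ (τ ∘ z₂) := by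
        rw [filter_or]
        exact card_union_le _ _

theorem unique_optimal_permutation_general (hσ : σ.Injective) (z₁ : ι → α) (z₂ : ι → β)
    (h : ∀ b, 2 * hammingDist z₁ (σ ∘ z₂) < #{i | z₁ i = σ b}) (hne : τ ≠ σ) :
    hammingDist z₁ (σ ∘ z₂) < hammingDist z₁ (τ ∘ z₂) := by
  obtain ⟨b, hb⟩ := Function.ne_iff.mp hne
  have h_small := h b
  have h_fiber := card_fiber_le_hammingDist_comp_add_hammingDist_comp hσ z₁ z₂ hb.symm
  lia

end

/-- Uniqueness of the optimal label permutation: if some permutation `τ*` satisfies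
`Ham(z₁, τ*∘z₂) < (1/2) min_a |Γ_a(z₁)|`, then `τ*` is the unique minimizer of
`τ ↦ Ham(z₁, τ∘z₂)` over permutations `τ` of `[k]`. -/
theorem unique_optimal_permutation (k n : ℕ) (hk : 1 ≤ k) (hn : 1 ≤ n)
    (z₁ z₂ : Fin n → Fin k) (τstar : Equiv.Perm (Fin k))
    (h : ∀ a : Fin k,
      2 * hamDist n k z₁ (fun i => τstar (z₂ i))
        < (Finset.univ.filter fun i => z₁ i = a).card) :
    ∀ τ : Equiv.Perm (Fin k), τ ≠ τstar →
      hamDist n k z₁ (fun i => τstar (z₂ i)) < hamDist n k z₁ (fun i => τ (z₂ i)) := by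
  intro τ hτ
  simp only [hamDist_eq_hammingDist] at h ⊢
  exact unique_optimal_permutation_general τstar.injective z₁ z₂ (fun b => h (τstar b))
    (DFunLike.coe_injective.ne hτ)
end

section
/- Rank bound for the expected adjacency matrix of a PABM: Let n ≥ 1 and k ≥ 1, let z : [n] → [k] be any labeling, let Λ = (λ_{ia}) be any real n×k matrix and B = (B_{ab}) any real k×k matrix. Then the n×n matrix P defined by P_{ij} = λ_{i z_j} λ_{j z_i} B_{z_i z_j} has rank at most k². -/
/-!
Extend the vectors `(λ_{ib})_{z_i = a}` by zero to all vertices. For given `i` and `j`, only the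
pair of clusters `(a, b) = (z_i, z_j)` contributes to the sum of the outer products of these
vectors over all blocks, so `P` factors through a space with one coordinate per block.
-/

section BlockwiseOuterProduct

variable {R m n κ l : Type*}

/-- The matrix whose column `(a, b)` is the column `b` of `u` restricted to the cluster of rows
labelled `a` and extended by zero. Its columns are the vectors whose outer products are the blocks
of a matrix that has rank at most one on each block. -/
def clusterColumns [Zero R] [DecidableEq κ] (z : m → κ) (u : m → l → R) :
    Matrix m (κ × l) R :=
  Matrix.of fun i p => if z i = p.1 then u i p.2 else 0

theorem clusterColumns_mul_transpose_swap [NonAssocSemiring R] [Fintype κ] [DecidableEq κ]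
    [Fintype l] [DecidableEq l] (z : m → κ) (w : n → l) (u : m → l → R) (v : n → κ → R) :
    clusterColumns z u * ((clusterColumns w v).submatrix id Prod.swap).transpose =
      Matrix.of fun i j => u i (w j) * v j (z i) := by
  ext i j
  simp [clusterColumns, Matrix.mul_apply, Fintype.sum_prod_type]

variable [CommSemiring R] [StrongRankCondition R] [Fintype n] [Fintype κ] [Fintype l]

theorem rank_blockwise_outer_product_le (z : m → κ) (w : n → l) (u : m → l → R) (v : n → κ → R) :
    (Matrix.of fun i j => u i (w j) * v j (z i)).rank ≤ Fintype.card κ * Fintype.card l := by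
  classical
  rw [← clusterColumns_mul_transpose_swap, ← Fintype.card_prod]
  exact (Matrix.rank_mul_le_left _ _).trans (Matrix.rank_le_card_width _)

theorem pabm_rank_le_general (z : m → κ) (w : n → l) (Λ : m → l → R) (M : n → κ → R)
    (B : κ → l → R) :
    (Matrix.of fun i j => Λ i (w j) * M j (z i) * B (z i) (w j)).rank ≤
      Fintype.card κ * Fintype.card l := by
  -- The connectivity depends on `i` only through `z i`, so it can be absorbed into the row factor.
  simpa only [mul_right_comm] using
    rank_blockwise_outer_product_le z w (fun i b => Λ i b * B (z i) b) M

end BlockwiseOuterProduct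

/-- Rank bound for the expected adjacency matrix of a PABM: for any labeling `z : [n] → [k]`,
any popularity matrix `Λ ∈ ℝ^{n×k}` and any connectivity matrix `B ∈ ℝ^{k×k}`, the matrix
`P` with entries `P_{ij} = λ_{i z_j} λ_{j z_i} B_{z_i z_j}` has rank at most `k²`. -/
theorem pabm_rank_le (n k : ℕ) (hn : 1 ≤ n) (hk : 1 ≤ k) (z : Fin n → Fin k)
    (Λ : Fin n → Fin k → ℝ) (B : Fin k → Fin k → ℝ) :
    (Matrix.of fun i j : Fin n => Λ i (z j) * Λ j (z i) * B (z i) (z j)).rank ≤ k ^ 2 := by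
  simpa only [Fintype.card_fin, sq] using pabm_rank_le_general z z Λ Λ B
end

section
/- Sparse asymptotics of the Rényi exponent between Bernoulli laws: Fix t ∈ (0,1) and r > 0 with r ≠ 1. Let (a_n) and (b_n) be sequences in (0,1) with a_n → 0 and b_n / a_n → r. Then the ratio of −log( a_n^t b_n^{1−t} + (1−a_n)^t (1−b_n)^{1−t} ) to ( t a_n + (1−t) b_n − a_n^t b_n^{1−t} ) tends to 1 as n → ∞. -/
open Filter

/-!
Write `G t x y = t x + (1 - t) y - x ^ t y ^ (1 - t)` for the gap in the weighted AM-GM inequality.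
The arithmetic means of `(a, b)` and `(1 - a, 1 - b)` add up to `1`, so the Bernoulli affinity
`a ^ t b ^ (1 - t) + (1 - a) ^ t (1 - b) ^ (1 - t)` equals `1 - G t a b - G t (1 - a) (1 - b)`.
The gap is pinched between `t (1 - t) / 2 * (x - y) ^ 2` divided by `max x y` and by `min x y`:
by homogeneity take `x = 1`, where `G t 1 s - t (1 - t) / 2 * (s - 1) ^ 2` is antitone in `s > 0`
and vanishes at `s = 1`, so that its sign on either side of `1` gives one of the two bounds.
Hence `G t (1 - a) (1 - b)` is at most `G t a b` times `max a b / (1 - max a b)`, which is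
negligible as `a, b → 0`, and `-log (1 - u) ~ u` concludes.
-/

open Asymptotics Topology

/-- The gap in the two-variable AM-GM inequality with weights `t` and `1 - t`; summed over the
outcomes of two laws it is `1` minus the sum inside the logarithm of their Rényi divergence of
order `t`. -/
noncomputable def amGmGap (t x y : ℝ) : ℝ :=
  t * x + (1 - t) * y - x ^ t * y ^ (1 - t)

section AmGmGap

variable {t x y : ℝ}

lemma amGmGap_swap (t x y : ℝ) : amGmGap (1 - t) y x = amGmGap t x y := by
  simp only [amGmGap, sub_sub_cancel]
  ring

lemma amGmGap_self (t : ℝ) (hx : 0 ≤ x) : amGmGap t x x = 0 := by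
  rw [amGmGap, ← Real.rpow_add' hx (by simp), add_sub_cancel, Real.rpow_one]
  ring

lemma amGmGap_one_left (t y : ℝ) : amGmGap t 1 y = t + (1 - t) * y - y ^ (1 - t) := by
  simp only [amGmGap, mul_one, Real.one_rpow, one_mul]

lemma amGmGap_eq_mul_amGmGap_one_div (t : ℝ) (hx : 0 < x) (hy : 0 ≤ y) :
    amGmGap t x y = x * amGmGap t 1 (y / x) := by
  have rpow_split : x ^ (1 - t) * x ^ t = x := by
    rw [← Real.rpow_add hx, sub_add_cancel, Real.rpow_one]
  have := (Real.rpow_pos_of_pos hx (1 - t)).ne'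
  rw [amGmGap_one_left, amGmGap, Real.div_rpow hy hx.le]
  field_simp
  linear_combination -y ^ (1 - t) * rpow_split

lemma continuous_amGmGap (ht : t ∈ Set.Icc (0 : ℝ) 1) :
    Continuous fun p : ℝ × ℝ => amGmGap t p.1 p.2 := by
  have rpow_fst : Continuous fun p : ℝ × ℝ => p.1 ^ t :=
    continuous_fst.rpow_const fun _ => Or.inr ht.1
  have rpow_snd : Continuous fun p : ℝ × ℝ => p.2 ^ (1 - t) :=
    continuous_snd.rpow_const fun _ => Or.inr (sub_nonneg.2 ht.2)
  unfold amGmGap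
  fun_prop

lemma one_sub_mul_sub_one_le_rpow_neg (ht : 0 ≤ t) (hx : 0 < x) :
    1 - t * (x - 1) ≤ x ^ (-t) :=
  calc 1 - t * (x - 1) ≤ Real.log x * -t + 1 := by
        linarith [mul_le_mul_of_nonneg_left (Real.log_le_sub_one_of_pos hx) ht]
    _ ≤ Real.exp (Real.log x * -t) := Real.add_one_le_exp _
    _ = x ^ (-t) := (Real.rpow_def_of_pos hx _).symm

lemma hasDerivAt_amGmGap_one_left (t : ℝ) (hx : 0 < x) :
    HasDerivAt (amGmGap t 1) ((1 - t) * (1 - x ^ (-t))) x := by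
  have rpow_deriv := Real.hasDerivAt_rpow_const (p := 1 - t) (Or.inl hx.ne')
  rw [sub_sub_cancel_left] at rpow_deriv
  refine ((((hasDerivAt_id x).const_mul (1 - t)).const_add t).sub rpow_deriv).congr_deriv ?_
    |>.congr_of_eventuallyEq (Eventually.of_forall (amGmGap_one_left t))
  ring

lemma antitoneOn_amGmGap_one_sub_sq (ht : t ∈ Set.Icc (0 : ℝ) 1) :
    AntitoneOn (fun s => amGmGap t 1 s - t * (1 - t) / 2 * (s - 1) ^ 2) (Set.Ioi 0) := by
  have hasDeriv : ∀ s ∈ Set.Ioi (0 : ℝ),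
      HasDerivAt (fun s => amGmGap t 1 s - t * (1 - t) / 2 * (s - 1) ^ 2)
        ((1 - t) * (1 - s ^ (-t) - t * (s - 1))) s := fun s hs => by
    refine ((hasDerivAt_amGmGap_one_left t hs).sub
      ((((hasDerivAt_id s).sub_const 1).pow 2).const_mul (t * (1 - t) / 2))).congr_deriv ?_
    simp only [id]
    ring
  refine antitoneOn_of_hasDerivWithinAt_nonpos (convex_Ioi 0)
    (fun s hs => (hasDeriv s hs).continuousAt.continuousWithinAt)
    (fun s hs => (hasDeriv s (interior_subset hs)).hasDerivWithinAt) fun s hs => ?_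
  refine mul_nonpos_of_nonneg_of_nonpos (sub_nonneg.2 ht.2) ?_
  linarith [one_sub_mul_sub_one_le_rpow_neg ht.1 (interior_subset hs)]

lemma mul_sq_div_max_le_amGmGap (ht : t ∈ Set.Icc (0 : ℝ) 1) (hx : 0 < x) (hy : 0 < y) :
    t * (1 - t) / 2 * ((x - y) ^ 2 / max x y) ≤ amGmGap t x y := by
  wlog hyx : y ≤ x generalizing t x y
  · have swapped := this (Set.Icc.mem_iff_one_sub_mem.1 ht) hy hx (le_of_not_ge hyx)
    rwa [amGmGap_swap, max_comm, sub_sq_comm, sub_sub_cancel, mul_comm (1 - t)] at swapped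
  have normalized := antitoneOn_amGmGap_one_sub_sq ht (div_pos hy hx) (Set.mem_Ioi.2 one_pos)
    ((div_le_one hx).2 hyx)
  simp only [amGmGap_self t zero_le_one, sub_self] at normalized
  rw [max_eq_left hyx, amGmGap_eq_mul_amGmGap_one_div t hx hy.le]
  calc t * (1 - t) / 2 * ((x - y) ^ 2 / x)
      = x * (t * (1 - t) / 2 * (y / x - 1) ^ 2) := by field_simp; ring
    _ ≤ x * amGmGap t 1 (y / x) := by gcongr; linarith

lemma amGmGap_le_mul_sq_div_min (ht : t ∈ Set.Icc (0 : ℝ) 1) (hx : 0 < x) (hy : 0 < y) :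
    amGmGap t x y ≤ t * (1 - t) / 2 * ((x - y) ^ 2 / min x y) := by
  wlog hxy : x ≤ y generalizing t x y
  · have swapped := this (Set.Icc.mem_iff_one_sub_mem.1 ht) hy hx (le_of_not_ge hxy)
    rwa [amGmGap_swap, min_comm, sub_sq_comm, sub_sub_cancel, mul_comm (1 - t)] at swapped
  have normalized := antitoneOn_amGmGap_one_sub_sq ht (Set.mem_Ioi.2 one_pos) (div_pos hy hx)
    ((one_le_div hx).2 hxy)
  simp only [amGmGap_self t zero_le_one, sub_self] at normalized
  rw [min_eq_left hxy, amGmGap_eq_mul_amGmGap_one_div t hx hy.le]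
  calc x * amGmGap t 1 (y / x)
      ≤ x * (t * (1 - t) / 2 * (y / x - 1) ^ 2) := by gcongr; linarith
    _ = t * (1 - t) / 2 * ((x - y) ^ 2 / x) := by field_simp; ring

lemma amGmGap_nonneg (ht : t ∈ Set.Icc (0 : ℝ) 1) (hx : 0 ≤ x) (hy : 0 ≤ y) :
    0 ≤ amGmGap t x y :=
  sub_nonneg.2 <| Real.geom_mean_le_arith_mean2_weighted ht.1 (sub_nonneg.2 ht.2) hx hy
    (add_sub_cancel t 1)

lemma amGmGap_pos (ht : t ∈ Set.Ioo (0 : ℝ) 1) (hx : 0 < x) (hy : 0 < y) (hxy : x ≠ y) :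
    0 < amGmGap t x y := by
  refine lt_of_lt_of_le ?_ (mul_sq_div_max_le_amGmGap (Set.Ioo_subset_Icc_self ht) hx hy)
  have := sub_pos.2 ht.2
  have := ht.1
  have := sub_ne_zero.2 hxy
  positivity

lemma amGmGap_one_sub_le (ht : t ∈ Set.Icc (0 : ℝ) 1) (hx : x ∈ Set.Ioo (0 : ℝ) 1)
    (hy : y ∈ Set.Ioo (0 : ℝ) 1) :
    amGmGap t (1 - x) (1 - y) ≤ max x y / (1 - max x y) * amGmGap t x y := by
  have max_pos : 0 < max x y := lt_max_of_lt_left hx.1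
  have one_sub_max_pos : 0 < 1 - max x y := sub_pos.2 (max_lt hx.2 hy.2)
  calc amGmGap t (1 - x) (1 - y)
      ≤ t * (1 - t) / 2 * ((1 - x - (1 - y)) ^ 2 / min (1 - x) (1 - y)) :=
        amGmGap_le_mul_sq_div_min ht (sub_pos.2 hx.2) (sub_pos.2 hy.2)
    _ = max x y / (1 - max x y) * (t * (1 - t) / 2 * ((x - y) ^ 2 / max x y)) := by
        rw [min_sub_sub_left]
        field_simp
        ring
    _ ≤ max x y / (1 - max x y) * amGmGap t x y := by
        gcongr
        exact mul_sq_div_max_le_amGmGap ht hx.1 hy.1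

lemma bernoulli_affinity_eq_one_sub_amGmGap (t x y : ℝ) :
    x ^ t * y ^ (1 - t) + (1 - x) ^ t * (1 - y) ^ (1 - t) =
      1 - (amGmGap t x y + amGmGap t (1 - x) (1 - y)) := by
  simp only [amGmGap]
  ring

end AmGmGap

lemma isEquivalent_neg_log_one_sub :
    (fun u : ℝ => -Real.log (1 - u)) ~[𝓝 0] fun u => u := by
  have hasDeriv : HasDerivAt (fun u : ℝ => -Real.log (1 - u)) 1 0 := by
    simpa using! (((hasDerivAt_id (0 : ℝ)).const_sub 1).log (by simp)).neg
  simpa [IsEquivalent, Pi.sub_def] using hasDeriv.isLittleO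

section SparseAsymptotics

variable {ι : Type*} {l : Filter ι} {t : ℝ} {a b : ι → ℝ}

lemma isLittleO_amGmGap_one_sub (ht : t ∈ Set.Icc (0 : ℝ) 1)
    (ha : ∀ᶠ n in l, 0 < a n) (hb : ∀ᶠ n in l, 0 < b n)
    (ha0 : Tendsto a l (𝓝 0)) (hb0 : Tendsto b l (𝓝 0)) :
    (fun n => amGmGap t (1 - a n) (1 - b n)) =o[l] fun n => amGmGap t (a n) (b n) := by
  have max_tendsto : Tendsto (fun n => max (a n) (b n)) l (𝓝 0) := by
    simpa using ha0.max hb0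
  have factor_tendsto : Tendsto (fun n => max (a n) (b n) / (1 - max (a n) (b n))) l (𝓝 0) := by
    simpa using! max_tendsto.div (max_tendsto.const_sub 1) (by simp)
  have factor_mul_isLittleO :
      (fun n => max (a n) (b n) / (1 - max (a n) (b n)) * amGmGap t (a n) (b n)) =o[l]
        fun n => amGmGap t (a n) (b n) := by
    simpa using ((isLittleO_one_iff ℝ).2 factor_tendsto).mul_isBigO
      (isBigO_refl (fun n => amGmGap t (a n) (b n)) l)
  refine IsBigO.trans_isLittleO (IsBigO.of_bound' ?_) factor_mul_isLittleO
  filter_upwards [ha, hb, ha0.eventually_lt_const one_pos, hb0.eventually_lt_const one_pos]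
    with n ha_pos hb_pos ha_lt hb_lt
  rw [Real.norm_of_nonneg (amGmGap_nonneg ht (sub_pos.2 ha_lt).le (sub_pos.2 hb_lt).le)]
  exact (amGmGap_one_sub_le ht ⟨ha_pos, ha_lt⟩ ⟨hb_pos, hb_lt⟩).trans (Real.le_norm_self _)

lemma tendsto_amGmGap_add_amGmGap_one_sub (ht : t ∈ Set.Icc (0 : ℝ) 1)
    (ha0 : Tendsto a l (𝓝 0)) (hb0 : Tendsto b l (𝓝 0)) :
    Tendsto (fun n => amGmGap t (a n) (b n) + amGmGap t (1 - a n) (1 - b n)) l (𝓝 0) := by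
  have gap_tendsto := ((continuous_amGmGap ht).tendsto (0, 0)).comp (ha0.prodMk_nhds hb0)
  have gap_one_sub_tendsto :=
    ((continuous_amGmGap ht).tendsto (1 - 0, 1 - 0)).comp
      ((ha0.const_sub 1).prodMk_nhds (hb0.const_sub 1))
  simpa [amGmGap_self] using! gap_tendsto.add gap_one_sub_tendsto

lemma tendsto_zero_of_tendsto_div {r : ℝ} (ha : ∀ᶠ n in l, a n ≠ 0)
    (ha0 : Tendsto a l (𝓝 0)) (hba : Tendsto (fun n => b n / a n) l (𝓝 r)) :
    Tendsto b l (𝓝 0) := by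
  have product_tendsto := hba.mul ha0
  rw [mul_zero] at product_tendsto
  exact product_tendsto.congr' (ha.mono fun n hn => div_mul_cancel₀ (b n) hn)

lemma eventually_ne_of_tendsto_div {r : ℝ} (hr : r ≠ 1) (ha : ∀ᶠ n in l, a n ≠ 0)
    (hba : Tendsto (fun n => b n / a n) l (𝓝 r)) : ∀ᶠ n in l, a n ≠ b n := by
  filter_upwards [ha, hba.eventually_ne hr] with n ha_ne ratio_ne hab
  exact ratio_ne (hab ▸ div_self ha_ne)

theorem renyi_exponent_sparse_asymptotics_general (ht : t ∈ Set.Ioo (0 : ℝ) 1)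
    (ha : ∀ᶠ n in l, 0 < a n) (hb : ∀ᶠ n in l, 0 < b n) (hab : ∀ᶠ n in l, a n ≠ b n)
    (ha0 : Tendsto a l (𝓝 0)) (hb0 : Tendsto b l (𝓝 0)) :
    Tendsto (fun n =>
        (-Real.log (a n ^ t * b n ^ (1 - t) + (1 - a n) ^ t * (1 - b n) ^ (1 - t)))
          / (t * a n + (1 - t) * b n - a n ^ t * b n ^ (1 - t)))
      l (𝓝 1) := by
  have gap_ne_zero : ∀ᶠ n in l, amGmGap t (a n) (b n) ≠ 0 := by
    filter_upwards [ha, hb, hab] with n ha_pos hb_pos hne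
    exact (amGmGap_pos ht ha_pos hb_pos hne).ne'
  have log_equiv := isEquivalent_neg_log_one_sub.comp_tendsto
    (tendsto_amGmGap_add_amGmGap_one_sub (Set.Ioo_subset_Icc_self ht) ha0 hb0)
  have sum_equiv := (IsEquivalent.refl (u := fun n => amGmGap t (a n) (b n))).add_isLittleO
    (isLittleO_amGmGap_one_sub (Set.Ioo_subset_Icc_self ht) ha hb ha0 hb0)
  simp only [bernoulli_affinity_eq_one_sub_amGmGap]
  exact (isEquivalent_iff_tendsto_one gap_ne_zero).1 (log_equiv.trans sum_equiv)

end SparseAsymptotics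

/-- Sparse asymptotics of the Rényi exponent between Bernoulli laws: fix `t ∈ (0,1)` and
`r > 0`, `r ≠ 1`; if `a_n, b_n ∈ (0,1)`, `a_n → 0` and `b_n/a_n → r`, then
`−log(a_n^t b_n^{1−t} + (1−a_n)^t (1−b_n)^{1−t}) / (t a_n + (1−t) b_n − a_n^t b_n^{1−t}) → 1`. -/
theorem renyi_exponent_sparse_asymptotics (t r : ℝ) (ht : t ∈ Set.Ioo (0 : ℝ) 1)
    (hr : 0 < r) (hr1 : r ≠ 1) (a b : ℕ → ℝ)
    (ha : ∀ n, a n ∈ Set.Ioo (0 : ℝ) 1) (hb : ∀ n, b n ∈ Set.Ioo (0 : ℝ) 1)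
    (ha0 : Tendsto a atTop (nhds 0))
    (hba : Tendsto (fun n => b n / a n) atTop (nhds r)) :
    Tendsto (fun n =>
        (-Real.log (a n ^ t * b n ^ (1 - t) + (1 - a n) ^ t * (1 - b n) ^ (1 - t)))
          / (t * a n + (1 - t) * b n - a n ^ t * b n ^ (1 - t)))
      atTop (nhds 1) := by
  have ha_ne : ∀ᶠ n in atTop, a n ≠ 0 := .of_forall fun n => (ha n).1.ne'
  exact renyi_exponent_sparse_asymptotics_general ht (.of_forall fun n => (ha n).1)
    (.of_forall fun n => (hb n).1) (eventually_ne_of_tendsto_div hr1 ha_ne hba) ha0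
    (tendsto_zero_of_tendsto_div ha_ne ha0 hba)
end
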